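/- Let $(x_n)_{n \geq 1}$ be a sequence in $[0,1)$ whose pair correlations are asymptotically Poissonian, i.e. for every real $s > 0$, $\lim_{N \to \infty} \frac{1}{N}\#\{(m,n) : 1 \leq m,n \leq N,\ m \neq n,\ \|x_m - x_n\| \leq s/N\} = 2s$. Then $(x_n)$ is equidistributed: for all $0 \leq a \leq b \leq 1$, $\lim_{N \to \infty} \frac{1}{N}\#\{1 \leq n \leq N : x_n \in [a,b]\} = b - a$. -/

import Mathlib

open Finset Filter

/-- Distance to the nearest integer. -/
noncomputable def distToInt (t : ℝ) : ℝ := |t - round t|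

/-- The number of indices in `S` whose cell lies in the window of length `L` starting at `j`. -/
def windowCount {ι : Type*} (S : Finset ι) (c : ι → ℤ) (L : ℕ) (j : ℤ) : ℕ :=
  (S.filter fun n => j ≤ c n ∧ c n < j + L).card

theorem sum_windowCount_eq {ι : Type*} (S T : Finset ι) (hTS : S ⊆ T) (c : ι → ℤ) (L : ℕ)
    (J : Finset ℤ) (hJ : ∀ n ∈ S, Finset.Ioc (c n - L) (c n) ⊆ J) :
    L * S.card ≤ ∑ j ∈ J, windowCount T c L j := by
  have h := Finset.sum_card_bipartiteAbove_eq_sum_card_bipartiteBelow (s := J) (t := T)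
    (fun j n => j ≤ c n ∧ c n < j + L)
  change ∑ j ∈ J, windowCount T c L j = _ at h
  rw [h]
  calc L * S.card = ∑ n ∈ S, L := by simp [mul_comm]
    _ ≤ ∑ n ∈ S, (J.bipartiteBelow (fun j n => j ≤ c n ∧ c n < j + L) n).card := by
        refine Finset.sum_le_sum fun n hn => ?_
        calc L = (Finset.Ioc (c n - L) (c n)).card := by simp
          _ ≤ _ := Finset.card_le_card fun j hj => by
            rw [Finset.mem_bipartiteBelow]
            refine ⟨hJ n hn hj, ?_⟩
            rw [Finset.mem_Ioc] at hj
            omega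
    _ ≤ _ := Finset.sum_le_sum_of_subset hTS

theorem sum_windowCount_sq_le {ι : Type*} (S : Finset ι) (c : ι → ℤ) (L : ℕ) (J : Finset ℤ) :
    ∑ j ∈ J, windowCount S c L j ^ 2 ≤
      ∑ l ∈ Finset.Icc 1 L,
        ((S ×ˢ S).filter fun p : ι × ι => |c p.1 - c p.2| < (l : ℤ)).card := by
  let r : ℤ → ι × ι → Prop := fun j p =>
    (j ≤ c p.1 ∧ c p.1 < j + L) ∧ (j ≤ c p.2 ∧ c p.2 < j + L)
  let q : ℕ → ι × ι → Prop := fun l p => |c p.1 - c p.2| < (l : ℤ)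
  have hsq : ∀ j, windowCount S c L j ^ 2 = ((S ×ˢ S).bipartiteAbove r j).card := fun j => by
    rw [sq, windowCount, ← Finset.card_product, ← Finset.filter_product]
    rfl
  simp only [hsq]
  rw [Finset.sum_card_bipartiteAbove_eq_sum_card_bipartiteBelow]
  change _ ≤ ∑ l ∈ Finset.Icc 1 L, ((S ×ˢ S).bipartiteAbove q l).card
  rw [Finset.sum_card_bipartiteAbove_eq_sum_card_bipartiteBelow]
  refine Finset.sum_le_sum fun p _ => ?_
  refine Finset.card_le_card_of_injOn (fun j => (max (c p.1) (c p.2) - j + 1).toNat) ?_ ?_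
  · intro j hj
    simp only [Finset.coe_bipartiteBelow, Set.mem_ofPred_eq, r, q, Finset.mem_Icc] at hj ⊢
    grind
  · intro j hj k hk hjk
    simp only [Finset.coe_bipartiteBelow, Set.mem_ofPred_eq, r] at hj hk hjk
    grind

theorem distToInt_le_abs (t : ℝ) : distToInt t ≤ |t| := by
  simpa [distToInt] using round_le t 0

theorem card_close_cells_le (x : ℕ → ℝ) (N l : ℕ) (hN : 0 < N) :
    ((Finset.Icc 1 N ×ˢ Finset.Icc 1 N).filter fun p : ℕ × ℕ =>
      |⌊N * x p.1⌋ - ⌊N * x p.2⌋| < (l : ℤ)).card ≤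
    N + ((Finset.Icc 1 N ×ˢ Finset.Icc 1 N).filter fun p : ℕ × ℕ =>
      p.1 ≠ p.2 ∧ distToInt (x p.1 - x p.2) ≤ (l : ℝ) / N).card := by
  classical
  calc _ ≤ ((Finset.Icc 1 N).diag ∪ (Finset.Icc 1 N ×ˢ Finset.Icc 1 N).filter fun p : ℕ × ℕ =>
      p.1 ≠ p.2 ∧ distToInt (x p.1 - x p.2) ≤ (l : ℝ) / N).card := Finset.card_le_card ?_
    _ ≤ _ := Finset.card_union_le _ _
    _ = _ := by rw [Finset.diag_card, Nat.card_Icc, Nat.add_sub_cancel]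
  rintro ⟨m, n⟩ hp
  rw [Finset.mem_filter, Finset.mem_product] at hp
  obtain ⟨⟨hm, hn⟩, hd⟩ := hp
  rw [Finset.mem_union, Finset.mem_diag, Finset.mem_filter, Finset.mem_product]
  by_cases hmn : m = n
  · exact Or.inl ⟨hm, hmn⟩
  refine Or.inr ⟨⟨hm, hn⟩, hmn, (distToInt_le_abs _).trans ?_⟩
  have hN' : (0 : ℝ) < N := by exact_mod_cast hN
  rw [le_div_iff₀ hN', ← abs_of_pos hN', ← abs_mul]
  dsimp only at hd ⊢
  have h1 : |(⌊N * x m⌋ : ℤ) - ⌊N * x n⌋| ≤ (l : ℤ) - 1 := by omega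
  have h2 : |(⌊N * x m⌋ : ℝ) - ⌊N * x n⌋| ≤ (l : ℝ) - 1 := by exact_mod_cast h1
  rw [abs_le] at h2 ⊢
  have := Int.floor_le (N * x m)
  have := Int.floor_le (N * x n)
  have := Int.lt_floor_add_one (N * x m)
  have := Int.lt_floor_add_one (N * x n)
  constructor <;> nlinarith

theorem card_Icc_bound (x : ℕ → ℝ) (hx : ∀ n, x n ∈ Set.Ico (0 : ℝ) 1) (N L : ℕ) (hN : 0 < N)
    (hL : 0 < L) (hc : ∀ l ∈ Finset.Icc 1 L,
      (((Finset.Icc 1 N ×ˢ Finset.Icc 1 N).filter fun p : ℕ × ℕ =>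
        p.1 ≠ p.2 ∧ distToInt (x p.1 - x p.2) ≤ (l : ℝ) / N).card : ℝ) ≤ N * (2 * l + 1))
    (a b ε : ℝ) (ha : 0 ≤ a) (hab : a ≤ b) (hb : b ≤ 1) (hε : 0 < ε) :
    (L : ℝ) * ((Finset.Icc 1 N).filter fun n => x n ∈ Set.Icc a b).card ≤
      (L + ε * L) * (N * (b - a) + L + 1) + (3 * L * N + L ^ 3) / (4 * (ε * L)) := by
  have hN' : (0 : ℝ) < N := by exact_mod_cast hN
  have hL' : (0 : ℝ) < L := by exact_mod_cast hL
  set c : ℕ → ℤ := fun n => ⌊N * x n⌋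
  set B : ℤ → ℕ := windowCount (Finset.Icc 1 N) c L
  set K : Finset ℤ := Finset.Ioc (-(L : ℤ)) N with hK
  set J : Finset ℤ := Finset.Ioc (⌊N * a⌋ - L) ⌊N * b⌋ with hJ
  have hJK : J ⊆ K := by
    have h1 : 0 ≤ ⌊N * a⌋ := Int.floor_nonneg.2 (by positivity)
    have h2 : ⌊N * b⌋ ≤ N := by
      rw [← Int.floor_natCast (R := ℝ) N]
      exact Int.floor_mono (by nlinarith)
    exact Finset.Ioc_subset_Ioc (by omega) h2
  have hJcard : (J.card : ℝ) ≤ N * (b - a) + L + 1 := by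
    have h0 : ⌊N * a⌋ ≤ ⌊N * b⌋ := Int.floor_mono (by gcongr)
    have h1 : (J.card : ℤ) = ⌊N * b⌋ - (⌊N * a⌋ - L) := by
      rw [hJ, Int.card_Ioc, Int.toNat_of_nonneg (by omega)]
    have h2 : (J.card : ℝ) = ⌊N * b⌋ - (⌊N * a⌋ - L) := by exact_mod_cast h1
    have := Int.floor_le (N * b)
    have := Int.lt_floor_add_one (N * a)
    rw [h2]
    linarith
  have hKcard : (K.card : ℝ) = N + L := by
    rw [hK, Int.card_Ioc, sub_neg_eq_add]
    norm_cast
  have hsumJ : (L : ℝ) * ((Finset.Icc 1 N).filter fun n => x n ∈ Set.Icc a b).card ≤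
      ∑ j ∈ J, (B j : ℝ) := by
    have h := sum_windowCount_eq _ (Finset.Icc 1 N)
      (Finset.filter_subset (fun n => x n ∈ Set.Icc a b) (Finset.Icc 1 N)) c L J ?_
    · exact_mod_cast h
    intro n hn
    have hn' := (Finset.mem_filter.1 hn).2
    have h1 : ⌊N * a⌋ ≤ c n := Int.floor_mono (by gcongr; exact hn'.1)
    have h2 : c n ≤ ⌊N * b⌋ := Int.floor_mono (by gcongr; exact hn'.2)
    exact Finset.Ioc_subset_Ioc (by omega) h2
  have hsumK : (L : ℝ) * N ≤ ∑ j ∈ K, (B j : ℝ) := by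
    have h := sum_windowCount_eq (Finset.Icc 1 N) (Finset.Icc 1 N) subset_rfl c L K ?_
    · rw [Nat.card_Icc, Nat.add_sub_cancel] at h
      exact_mod_cast h
    intro n _
    have h1 : 0 ≤ c n := Int.floor_nonneg.2 (mul_nonneg hN'.le (hx n).1)
    have h2 : c n ≤ N := by
      rw [← Int.floor_natCast (R := ℝ) N]
      exact Int.floor_mono (by nlinarith [(hx n).2])
    exact Finset.Ioc_subset_Ioc (by omega) h2
  have hsq : ∑ j ∈ K, (B j : ℝ) ^ 2 ≤ N * (L ^ 2 + 3 * L) := by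
    have h : ∑ j ∈ K, (B j : ℝ) ^ 2 ≤ ∑ l ∈ Finset.Icc 1 L,
        (((Finset.Icc 1 N ×ˢ Finset.Icc 1 N).filter
          fun p : ℕ × ℕ => |c p.1 - c p.2| < (l : ℤ)).card : ℝ) := by
      exact_mod_cast sum_windowCount_sq_le (Finset.Icc 1 N) c L K
    have hsum : ∀ M : ℕ, ∑ l ∈ Finset.Icc 1 M, (N + N * (2 * (l : ℝ) + 1)) =
        N * ((M : ℝ) ^ 2 + 3 * M) := fun M => by
      induction M with
      | zero => simp
      | succ M ih =>
        rw [Finset.sum_Icc_succ_top (by omega), ih]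
        push_cast
        ring
    rw [← hsum]
    refine h.trans (Finset.sum_le_sum fun l hl => ?_)
    have h1 : (((Finset.Icc 1 N ×ˢ Finset.Icc 1 N).filter
          fun p : ℕ × ℕ => |c p.1 - c p.2| < (l : ℤ)).card : ℝ) ≤ _ :=
      Nat.cast_le.2 (card_close_cells_le x N l hN)
    rw [Nat.cast_add] at h1
    linarith [hc l hl]
  have hvar : ∑ j ∈ J, ((B j : ℝ) - L) ^ 2 ≤ 3 * L * N + L ^ 3 := by
    calc ∑ j ∈ J, ((B j : ℝ) - L) ^ 2 ≤ ∑ j ∈ K, ((B j : ℝ) - L) ^ 2 :=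
          Finset.sum_le_sum_of_subset_of_nonneg hJK fun _ _ _ => sq_nonneg _
      _ = ∑ j ∈ K, (B j : ℝ) ^ 2 - 2 * L * ∑ j ∈ K, (B j : ℝ) + K.card * L ^ 2 := by
          rw [Finset.mul_sum, ← Finset.sum_sub_distrib, ← nsmul_eq_mul, ← Finset.sum_const,
            ← Finset.sum_add_distrib]
          exact Finset.sum_congr rfl fun _ _ => by ring
      _ ≤ _ := by
          rw [hKcard]
          nlinarith [mul_le_mul_of_nonneg_left hsumK hL'.le]
  have hεL : 0 < ε * L := by positivity
  calc _ ≤ ∑ j ∈ J, (B j : ℝ) := hsumJ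
    _ ≤ ∑ j ∈ J, ((L + ε * L) + ((B j : ℝ) - L) ^ 2 / (4 * (ε * L))) := by
        refine Finset.sum_le_sum fun j _ => ?_
        rw [← sub_le_iff_le_add', le_div_iff₀ (by positivity)]
        nlinarith [sq_nonneg ((B j : ℝ) - L - 2 * (ε * L))]
    _ = (L + ε * L) * J.card + (∑ j ∈ J, ((B j : ℝ) - L) ^ 2) / (4 * (ε * L)) := by
        rw [Finset.sum_add_distrib, Finset.sum_const, nsmul_eq_mul, Finset.sum_div, mul_comm]
    _ ≤ _ := by gcongr

theorem eventually_card_Icc_div_lt (x : ℕ → ℝ) (hx : ∀ n, x n ∈ Set.Ico (0 : ℝ) 1)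
    (hppc : ∀ s : ℝ, 0 < s →
      Tendsto (fun N : ℕ =>
        (((Finset.Icc 1 N ×ˢ Finset.Icc 1 N).filter (fun p : ℕ × ℕ =>
          p.1 ≠ p.2 ∧ distToInt (x p.1 - x p.2) ≤ s / N)).card : ℝ) / N)
        atTop (nhds (2 * s)))
    (a b η : ℝ) (ha : 0 ≤ a) (hab : a ≤ b) (hb : b ≤ 1) (hη : 0 < η) :
    ∀ᶠ N : ℕ in atTop,
      (((Finset.Icc 1 N).filter (fun n => x n ∈ Set.Icc a b)).card : ℝ) / N < b - a + η := by
  obtain ⟨ε, hε, hεη⟩ : ∃ ε : ℝ, 0 < ε ∧ 4 * ε < η := ⟨η / 5, by positivity, by linarith⟩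
  obtain ⟨L, hL⟩ := exists_nat_gt (max 0 (1 / ε ^ 2))
  have hL' : (0 : ℝ) < L := (le_max_left _ _).trans_lt hL
  have hLε : 1 < L * ε ^ 2 := (div_lt_iff₀ (by positivity)).1 ((le_max_right _ _).trans_lt hL)
  have hlim : Tendsto (fun N : ℕ =>
      ((1 + ε) * (L + 1) + L / (4 * ε)) / (N : ℝ)) atTop (nhds 0) :=
    tendsto_const_div_atTop_nhds_zero_nat _
  have hpairs : ∀ᶠ N : ℕ in atTop, ∀ l ∈ Finset.Icc 1 L,
      (((Finset.Icc 1 N ×ˢ Finset.Icc 1 N).filter fun p : ℕ × ℕ =>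
        p.1 ≠ p.2 ∧ distToInt (x p.1 - x p.2) ≤ (l : ℝ) / N).card : ℝ) / N < 2 * l + 1 := by
    rw [Filter.eventually_all_finset]
    intro l hl
    have : 0 < l := (Finset.mem_Icc.1 hl).1
    exact (hppc l (by exact_mod_cast this)).eventually_lt_const (by linarith)
  filter_upwards [hpairs, hlim.eventually_lt_const hε, eventually_gt_atTop 0] with N hc hNε hN
  have hN' : (0 : ℝ) < N := by exact_mod_cast hN
  have key := card_Icc_bound x hx N L hN (by exact_mod_cast hL')
    (fun l hl => by rw [mul_comm]; exact ((div_lt_iff₀ hN').1 (hc l hl)).le) a b ε ha hab hb hε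
  have hrhs : (L + ε * L) * (N * (b - a) + L + 1) + (3 * L * N + L ^ 3) / (4 * (ε * L)) =
      L * N * ((1 + ε) * (b - a) + ((1 + ε) * (L + 1) + L / (4 * ε)) / (N : ℝ)
        + 3 / (4 * (ε * L))) := by
    field_simp
    ring
  rw [hrhs, mul_assoc, mul_le_mul_iff_right₀ hL', mul_comm (N : ℝ), ← div_le_iff₀ hN'] at key
  have h3 : 3 / (4 * (ε * L)) ≤ ε := by
    rw [div_le_iff₀ (by positivity)]
    nlinarith
  nlinarith

theorem stmt_10 (x : ℕ → ℝ) (hx : ∀ n, x n ∈ Set.Ico (0 : ℝ) 1)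
    (hppc : ∀ s : ℝ, 0 < s →
      Tendsto (fun N : ℕ =>
        (((Finset.Icc 1 N ×ˢ Finset.Icc 1 N).filter (fun p : ℕ × ℕ =>
          p.1 ≠ p.2 ∧ distToInt (x p.1 - x p.2) ≤ s / N)).card : ℝ) / N)
        atTop (nhds (2 * s))) :
    ∀ a b : ℝ, 0 ≤ a → a ≤ b → b ≤ 1 →
      Tendsto (fun N : ℕ =>
        (((Finset.Icc 1 N).filter (fun n => x n ∈ Set.Icc a b)).card : ℝ) / N)
        atTop (nhds (b - a)) := by
  intro a b ha hab hb
  have hupper := eventually_card_Icc_div_lt x hx hppc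
  rw [Metric.tendsto_nhds]
  intro η hη
  filter_upwards [hupper a b η ha hab hb hη,
    hupper 0 a (η / 2) le_rfl ha (hab.trans hb) (half_pos hη),
    hupper b 1 (η / 2) (ha.trans hab) hb le_rfl (half_pos hη), eventually_gt_atTop 0]
    with N h h0 h1 hN
  have hN' : (0 : ℝ) < N := by exact_mod_cast hN
  have hcover : N ≤ ((Finset.Icc 1 N).filter fun n => x n ∈ Set.Icc a b).card +
      ((Finset.Icc 1 N).filter fun n => x n ∈ Set.Icc 0 a).card +
      ((Finset.Icc 1 N).filter fun n => x n ∈ Set.Icc b 1).card := by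
    classical
    calc N = (Finset.Icc 1 N).card := by simp
      _ ≤ ((Finset.Icc 1 N).filter (fun n => x n ∈ Set.Icc a b) ∪
          (Finset.Icc 1 N).filter (fun n => x n ∈ Set.Icc 0 a) ∪
          (Finset.Icc 1 N).filter (fun n => x n ∈ Set.Icc b 1)).card :=
        Finset.card_le_card fun n hn => ?_
      _ ≤ _ := (Finset.card_union_le (_ ∪ _) _).trans
        (Nat.add_le_add_right (Finset.card_union_le _ _) _)
    simp only [Finset.mem_union, Finset.mem_filter, hn, true_and, Set.mem_Icc]
    have := hx n
    grind
  have hcover' : (N : ℝ) ≤ ((Finset.Icc 1 N).filter fun n => x n ∈ Set.Icc a b).card +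
      ((Finset.Icc 1 N).filter fun n => x n ∈ Set.Icc 0 a).card +
      ((Finset.Icc 1 N).filter fun n => x n ∈ Set.Icc b 1).card := by
    exact_mod_cast hcover
  have hone := div_le_div_of_nonneg_right hcover' hN'.le
  rw [div_self hN'.ne', add_div, add_div] at hone
  rw [Real.dist_eq, abs_lt]
  constructor <;> linarith
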